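/- For all x in (0, π/2), sin(x)/x < (cos x + 2)/3 < x/sinh(x). -/

import Mathlib

open Real

theorem pos_of_deriv_aux (f f' : ℝ → ℝ) (h0 : f 0 = 0) (hd : ∀ x, HasDerivAt f (f' x) x)
    (hp : ∀ x, 0 < x → x < π/2 → 0 < f' x) (x : ℝ) (hx : 0 < x) (hx2 : x < π/2) : 0 < f x := by
  obtain ⟨c, hc, he⟩ := exists_hasDerivAt_eq_slope f f' hx
    (fun y _ => (hd y).continuousAt.continuousWithinAt) (fun y _ => hd y)
  have h := hp c hc.1 (hc.2.trans hx2)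
  rw [he, h0, sub_zero, sub_zero] at h
  exact (div_pos_iff_of_pos_right hx).1 h

theorem stmt15 (x : ℝ) (hx : 0 < x) (hx2 : x < π/2) :
    Real.sin x/x < (Real.cos x + 2)/3 ∧ (Real.cos x + 2)/3 < x/Real.sinh x := by
  have hs : ∀ y : ℝ, 0 < y → y < π/2 → 0 < Real.sin y := fun y h1 h2 =>
    Real.sin_pos_of_pos_of_lt_pi h1 (by linarith)
  have hc : ∀ y : ℝ, 0 < y → y < π/2 → 0 < Real.cos y := fun y h1 h2 =>
    Real.cos_pos_of_mem_Ioo ⟨by linarith, h2⟩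
  have hsh : ∀ y : ℝ, 0 < y → 0 < Real.sinh y := fun y h => Real.sinh_pos_iff.2 h
  have S := Real.hasDerivAt_sin
  have C := Real.hasDerivAt_cos
  have SH := Real.hasDerivAt_sinh
  have CH := Real.hasDerivAt_cosh
  have I := fun y : ℝ => hasDerivAt_id' y
  constructor
  · have a1 := pos_of_deriv_aux (fun y => Real.sin y - y * Real.cos y)
      (fun y => y * Real.sin y) (by simp)
      (fun y => ((S y).sub ((I y).mul (C y))).congr_deriv (by ring))
      (fun y h1 h2 => mul_pos h1 (hs y h1 h2))
    have a2 := pos_of_deriv_aux (fun y => 2 - 2 * Real.cos y - y * Real.sin y)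
      (fun y => Real.sin y - y * Real.cos y) (by simp)
      (fun y => ((((C y).const_mul 2).const_sub 2).sub ((I y).mul (S y))).congr_deriv (by ring))
      a1
    have a3 := pos_of_deriv_aux (fun y => y * (Real.cos y + 2) - 3 * Real.sin y)
      (fun y => 2 - 2 * Real.cos y - y * Real.sin y) (by simp)
      (fun y => (((I y).mul ((C y).add_const 2)).sub ((S y).const_mul 3)).congr_deriv (by ring))
      a2 x hx hx2
    rw [div_lt_div_iff₀ hx (by norm_num)]
    linarith
  · have b1 := pos_of_deriv_aux (fun y => Real.cosh y * Real.sin y - Real.sinh y * Real.cos y)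
      (fun y => 2 * (Real.sinh y * Real.sin y)) (by simp)
      (fun y => (((CH y).mul (S y)).sub ((SH y).mul (C y))).congr_deriv (by ring))
      (fun y h1 h2 => mul_pos two_pos (mul_pos (hsh y h1) (hs y h1 h2)))
    have b2 := pos_of_deriv_aux (fun y => 1 - Real.cosh y * Real.cos y)
      (fun y => Real.cosh y * Real.sin y - Real.sinh y * Real.cos y) (by simp)
      (fun y => (((CH y).mul (C y)).const_sub 1).congr_deriv (by ring)) b1
    have b3 : ∀ y : ℝ, 0 < y → y < π/2 → 0 < 2 * (Real.cosh y * Real.sin y - Real.sinh y) := by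
      intro y h1 h2
      have h := b2 y h1 h2
      have hp : 0 < Real.cosh y * Real.cos y := mul_pos (Real.cosh_pos y) (hc y h1 h2)
      have hlt : Real.sinh y ^ 2 < (Real.cosh y * Real.sin y) ^ 2 := by
        have e1 := Real.cosh_sq y
        have e2 := Real.sin_sq y
        have : (Real.cosh y * Real.cos y) ^ 2 < 1 := by nlinarith
        rw [mul_pow] at this ⊢
        rw [e2]
        linarith
      have := lt_of_pow_lt_pow_left₀ 2 (mul_pos (Real.cosh_pos y) (hs y h1 h2)).le hlt
      linarith
    have b4 := pos_of_deriv_aux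
      (fun y => 3 - Real.cosh y * (Real.cos y + 2) + Real.sinh y * Real.sin y)
      (fun y => 2 * (Real.cosh y * Real.sin y - Real.sinh y)) (by norm_num)
      (fun y => ((((CH y).mul ((C y).add_const 2)).const_sub 3).add
        ((SH y).mul (S y))).congr_deriv (by ring)) b3
    have b5 := pos_of_deriv_aux
      (fun y => 3 * y - Real.sinh y * (Real.cos y + 2))
      (fun y => 3 - Real.cosh y * (Real.cos y + 2) + Real.sinh y * Real.sin y) (by simp)
      (fun y => (((I y).const_mul 3).sub ((SH y).mul ((C y).add_const 2))).congr_deriv (by ring))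
      b4 x hx hx2
    rw [div_lt_div_iff₀ (by norm_num) (hsh x hx)]
    linarith
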